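/- Let i ≥ 1, L ≥ 1 and nonnegative integers a_1,…,a_i be given, and set K = (i−1)L + Σ_{j=1}^{i} a_j + 1. Color the nodes of the (a_i,…,a_1)_L-bar-ICP by assigning, for each color c ∈ [K], color c to the i nodes (<c + Σ_{m=1}^{v−1} a_m + (v−1)L>_K, v) for v ∈ [i] (so each node receives exactly one color and each color appears exactly once in each column). Then this coloring is proper: whenever two distinct nodes (k_1,v_1) and (k_2,v_2) receive the same color, (k_2,v_2) ∈ K_{k_1} and (k_1,v_1) ∈ K_{k_2}. -/

import Mathlib

open Finset

/-- `<m>_n`: the unique element of `{1,…,n}` congruent to `m` modulo `n`. -/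
def angMod (m : ℤ) (n : ℕ) : ℕ :=
  if m % (n : ℤ) = 0 then n else (m % (n : ℤ)).toNat

/-- The side-information index set `K_k` of user `k` in the
`(a_i,…,a_1)_L`-bar-ICP, as a set of nodes `(b,t)`. -/
def knownIdx (K i L : ℕ) (a : ℕ → ℕ) (k : ℕ) : Set (ℕ × ℕ) :=
  {p | ∃ t ∈ Finset.Icc 1 i, ∃ v ∈ Finset.Icc 1 (i - 1), ∃ r ∈ Finset.Icc 1 L,
    p.2 = t ∧
    p.1 = angMod ((k : ℤ) + (∑ j ∈ Finset.Icc 1 v, (a (angMod ((i : ℤ) + (t : ℤ) - (j : ℤ)) i) : ℤ))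
        + ((v : ℤ) - 1) * (L : ℤ) + (r : ℤ)) K}

/-!
Let the columns continue periodically beyond `i`, column `m + i` being a copy of column `m`. A color
climbs `a_m + L` rows (modulo `K`) from column `m` to column `m + 1`. The side information of user
`k` in column `t` contains, for each `v < i`, the `L` consecutive rows ending with the one reached
from row `k` by climbing through the `v` columns before `t`, which may start in the previous turn.
So from column `v₁` to a later column `v₂ ≤ i` the color lands on the last of these rows (`r = L`).
One full turn climbs `∑ a_m + i L = K + (L - 1)` rows, so climbing from `v₂` on to the copy of `v₁`
in the next turn ends, modulo `K`, `L - 1` rows above the node of that color in column `v₁`, which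
is therefore the first of these rows (`r = 1`).
-/

theorem angMod_eq_of_modEq {x y : ℤ} {n : ℕ} (h : x ≡ y [ZMOD n]) : angMod x n = angMod y n := by
  unfold angMod
  rw [h.eq]

theorem angMod_modEq (x : ℤ) {n : ℕ} (hn : n ≠ 0) : (angMod x n : ℤ) ≡ x [ZMOD n] := by
  unfold angMod
  split_ifs with hx
  · simp [Int.ModEq, hx]
  · rw [Int.toNat_of_nonneg (Int.emod_nonneg x (by exact_mod_cast hn))]
    exact Int.mod_modEq x n

theorem angMod_natCast_of_mem_Icc {m n : ℕ} (hm : m ∈ Icc 1 n) : angMod m n = m := by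
  obtain ⟨h_pos, h_le⟩ := mem_Icc.1 hm
  unfold angMod
  rcases h_le.lt_or_eq with h_lt | rfl
  · rw [← Int.natCast_mod, Nat.mod_eq_of_lt h_lt, if_neg (by omega), Int.toNat_natCast]
  · simp

theorem angMod_natCast_add_self (m n : ℕ) : angMod ((m + n : ℕ) : ℤ) n = angMod m n :=
  angMod_eq_of_modEq (by simp [Int.ModEq])

theorem sum_Icc_one_sub_eq_sum_Ico {M : Type*} [AddCommMonoid M] (f : ℤ → M) {n v : ℕ}
    (hv : v ≤ n) : ∑ j ∈ Icc 1 v, f ((n : ℤ) - j) = ∑ m ∈ Ico (n - v) n, f m := by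
  refine sum_nbij' (fun j => n - j) (fun m => n - m) ?_ ?_ ?_ ?_ ?_ <;>
    simp only [mem_Icc, mem_Ico] <;> intro j hj
  case refine_5 => rw [Nat.cast_sub (by omega)]
  all_goals omega

section ColumnHeight

variable (i L : ℕ) (a : ℕ → ℕ)

/-- The number of rows a color climbs from column `1` to column `n`, where the columns are continued
periodically beyond `i`: each column `m` contributes `a_m + L`, the index `m` being read modulo `i`.
Columns are numbered from `1`. -/
def columnHeight (n : ℕ) : ℤ :=
  ∑ m ∈ Ico 1 n, ((a (angMod m i) : ℤ) + L)

variable {i} in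
theorem columnHeight_of_le {v : ℕ} (hv : 1 ≤ v) (hvi : v ≤ i + 1) :
    columnHeight i L a v = ∑ m ∈ Icc 1 (v - 1), (a m : ℤ) + ((v : ℤ) - 1) * L := by
  have h_Ico : Ico 1 v = Icc 1 (v - 1) := by ext; simp only [mem_Ico, mem_Icc]; omega
  have h_index : ∀ m ∈ Icc 1 (v - 1), (a (angMod m i) : ℤ) = a m := fun m hm => by
    rw [angMod_natCast_of_mem_Icc (Icc_subset_Icc_right (by omega) hm)]
  rw [columnHeight, sum_add_distrib, h_Ico, sum_congr rfl h_index]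
  simp [Nat.cast_sub hv]

theorem columnHeight_add_period {n : ℕ} (hn : 1 ≤ n) :
    columnHeight i L a (n + i) =
      columnHeight i L a n + (∑ m ∈ Icc 1 i, (a m : ℤ) + (i : ℤ) * L) := by
  have h_first_turn : columnHeight i L a (1 + i) = ∑ m ∈ Icc 1 i, (a m : ℤ) + (i : ℤ) * L := by
    rw [columnHeight_of_le L a (Nat.le_add_right 1 i) (Nat.add_comm 1 i).le]
    simp
  have h_later : ∑ m ∈ Ico (1 + i) (n + i), ((a (angMod m i) : ℤ) + L) = columnHeight i L a n := by
    rw [← sum_Ico_add' (fun m : ℕ => (a (angMod m i) : ℤ) + L)]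
    simp only [angMod_natCast_add_self, columnHeight]
  calc columnHeight i L a (n + i)
      = columnHeight i L a (1 + i) + ∑ m ∈ Ico (1 + i) (n + i), ((a (angMod m i) : ℤ) + L) :=
        (sum_Ico_consecutive _ (by omega) (by omega)).symm
    _ = _ := by rw [h_first_turn, h_later, add_comm]

theorem sum_sideInfo_eq_columnHeight_sub {n v : ℕ} (hv : v < n) :
    ∑ j ∈ Icc 1 v, (a (angMod ((n : ℤ) - j) i) : ℤ) + (v : ℤ) * L =
      columnHeight i L a n - columnHeight i L a (n - v) := by
  have h_split := sum_Ico_consecutive (fun m : ℕ => (a (angMod m i) : ℤ) + L)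
    (show 1 ≤ n - v by omega) (Nat.sub_le n v)
  rw [columnHeight, columnHeight, ← h_split, add_sub_cancel_left,
    ← sum_Icc_one_sub_eq_sum_Ico (fun m => (a (angMod m i) : ℤ) + L) hv.le, sum_add_distrib]
  simp

variable {i L}

theorem mem_knownIdx_of_modEq {K k t v r : ℕ} {x y : ℤ} (hk : (k : ℤ) ≡ y [ZMOD K])
    (ht : t ∈ Icc 1 i) (hv : v ∈ Icc 1 (i - 1)) (hr : r ∈ Icc 1 L)
    (hx : x ≡ y + (columnHeight i L a (t + i) - columnHeight i L a (t + i - v) - L + r) [ZMOD K]) :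
    (angMod x K, t) ∈ knownIdx K i L a k := by
  refine ⟨t, ht, v, hv, r, hr, rfl, angMod_eq_of_modEq ?_⟩
  rw [mem_Icc] at ht hv
  have hxk := hx.trans (hk.symm.add_right _)
  rw [add_comm t i, ← sum_sideInfo_eq_columnHeight_sub i L a (by omega), Nat.cast_add] at hxk
  convert hxk using 1
  ring

theorem add_columnHeight_mem_knownIdx_of_lt {K u t : ℕ} (c : ℤ) (hK : K ≠ 0) (hL : 1 ≤ L)
    (hu : 1 ≤ u) (hut : u < t) (ht : t ≤ i) :
    (angMod (c + columnHeight i L a t) K, t) ∈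
      knownIdx K i L a (angMod (c + columnHeight i L a u) K) := by
  refine mem_knownIdx_of_modEq a (v := t - u) (r := L) (angMod_modEq _ hK)
    (mem_Icc.2 ⟨by omega, ht⟩) (mem_Icc.2 ⟨by omega, by omega⟩) (right_mem_Icc.2 hL) ?_
  rw [show t + i - (t - u) = u + i by omega, columnHeight_add_period i L a hu,
    columnHeight_add_period i L a (hu.trans hut.le)]
  exact congrArg (· % (K : ℤ)) (by ring)

theorem add_columnHeight_mem_knownIdx_of_gt {K u t : ℕ} (c : ℤ)
    (hK : K = (i - 1) * L + ∑ j ∈ Icc 1 i, a j + 1) (hL : 1 ≤ L) (hu : 1 ≤ u) (hut : u < t)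
    (ht : t ≤ i) :
    (angMod (c + columnHeight i L a u) K, u) ∈
      knownIdx K i L a (angMod (c + columnHeight i L a t) K) := by
  have h_turn : ∑ m ∈ Icc 1 i, (a m : ℤ) + (i : ℤ) * L = K + (L - 1) := by
    rw [hK]
    push_cast [Nat.cast_sub (show 1 ≤ i by omega)]
    ring
  refine mem_knownIdx_of_modEq a (v := u + i - t) (r := 1) (angMod_modEq _ (by omega))
    (mem_Icc.2 ⟨hu, by omega⟩) (mem_Icc.2 ⟨by omega, by omega⟩) (left_mem_Icc.2 hL) ?_
  rw [show u + i - (u + i - t) = t by omega, columnHeight_add_period i L a hu, h_turn]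
  calc c + columnHeight i L a u
      ≡ c + columnHeight i L a u + K [ZMOD K] := by simp [Int.ModEq]
    _ = c + columnHeight i L a t +
          (columnHeight i L a u + (K + (L - 1)) - columnHeight i L a t - L + (1 : ℕ)) := by
        push_cast
        ring

end ColumnHeight

/-- Lemma 9 of the paper: the coloring assigning, for each
color `c ∈ [K]`, color `c` to the nodes `(<c + Σ_{m=1}^{v−1} a_m + (v−1)L>_K, v)`
for `v ∈ [i]`, is a proper coloring: two distinct nodes receiving the same color
are side-information nodes of each other. -/
theorem stmt6 (i L : ℕ) (hi : 1 ≤ i) (hL : 1 ≤ L) (a : ℕ → ℕ)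
    (K : ℕ) (hK : K = (i - 1) * L + (∑ j ∈ Finset.Icc 1 i, a j) + 1)
    (c k₁ v₁ k₂ v₂ : ℕ)
    (hc : c ∈ Finset.Icc 1 K) (hv₁ : v₁ ∈ Finset.Icc 1 i) (hv₂ : v₂ ∈ Finset.Icc 1 i)
    (hk₁ : k₁ = angMod ((c : ℤ) + (∑ m ∈ Finset.Icc 1 (v₁ - 1), (a m : ℤ))
        + ((v₁ : ℤ) - 1) * (L : ℤ)) K)
    (hk₂ : k₂ = angMod ((c : ℤ) + (∑ m ∈ Finset.Icc 1 (v₂ - 1), (a m : ℤ))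
        + ((v₂ : ℤ) - 1) * (L : ℤ)) K)
    (hne : (k₁, v₁) ≠ (k₂, v₂)) :
    (k₂, v₂) ∈ knownIdx K i L a k₁ ∧ (k₁, v₁) ∈ knownIdx K i L a k₂ := by
  rw [mem_Icc] at hv₁ hv₂
  rw [add_assoc, ← columnHeight_of_le L a hv₁.1 (hv₁.2.trans i.le_succ)] at hk₁
  rw [add_assoc, ← columnHeight_of_le L a hv₂.1 (hv₂.2.trans i.le_succ)] at hk₂
  subst hk₁ hk₂
  have hK_ne : K ≠ 0 := by omega
  rcases lt_trichotomy v₁ v₂ with h | rfl | h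
  · exact ⟨add_columnHeight_mem_knownIdx_of_lt a c hK_ne hL hv₁.1 h hv₂.2,
      add_columnHeight_mem_knownIdx_of_gt a c hK hL hv₁.1 h hv₂.2⟩
  · exact absurd rfl hne
  · exact ⟨add_columnHeight_mem_knownIdx_of_gt a c hK hL hv₂.1 h hv₁.2,
      add_columnHeight_mem_knownIdx_of_lt a c hK_ne hL hv₂.1 h hv₁.2⟩
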